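/- Let n ≥ 2. In the hyperoctahedral group B_n, let W_P = {w ∈ B_n : w(1) = 1} and W_Q = {w ∈ B_n : w(j) > 0 for all 1 ≤ j ≤ n}. Then each of the two sets E_0 = {w : w(j) = −1 for some 1 ≤ j ≤ n} and E_1 = {w : w(j) = 1 for some 1 ≤ j ≤ n} is a single (W_P, W_Q) double coset; in particular these two sets partition B_n and are exactly the (W_P, W_Q) double cosets. -/

import Mathlib

/-- The set `{−n, …, −1, 1, …, n}` of signed indices. -/
def SIdx (n : ℕ) : Type := {x : ℤ // x ≠ 0 ∧ x.natAbs ≤ n}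

instance (n : ℕ) : Neg (SIdx n) :=
  ⟨fun x => ⟨-x.1, ⟨neg_ne_zero.mpr x.2.1, by simpa using x.2.2⟩⟩⟩

/-- Membership in the hyperoctahedral group `B_n`: a permutation `w` of
`{−n, …, −1, 1, …, n}` satisfying `w(−x) = −w(x)` for all `x`. -/
def IsSignedPerm {n : ℕ} (w : Equiv.Perm (SIdx n)) : Prop :=
  ∀ x : SIdx n, w (-x) = -(w x)

/-- `W_P = {w ∈ B_n : w(1) = 1}`. -/
def InWP {n : ℕ} (h : Equiv.Perm (SIdx n)) : Prop :=
  IsSignedPerm h ∧ ∀ x : SIdx n, x.1 = 1 → (h x).1 = 1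

/-- `W_Q = {w ∈ B_n : w(j) > 0 for all 1 ≤ j ≤ n}`. -/
def InWQ {n : ℕ} (k : Equiv.Perm (SIdx n)) : Prop :=
  IsSignedPerm k ∧ ∀ x : SIdx n, 0 < x.1 → 0 < (k x).1

/-- `w` and `w'` lie in the same `(W_P, W_Q)` double coset. -/
def SameDC {n : ℕ} (w w' : Equiv.Perm (SIdx n)) : Prop :=
  ∃ h k : Equiv.Perm (SIdx n), InWP h ∧ InWQ k ∧ w' = h * w * k

/-- `E_0 = {w : w(j) = −1 for some 1 ≤ j ≤ n}`. -/
def InE0 {n : ℕ} (w : Equiv.Perm (SIdx n)) : Prop :=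
  ∃ j : SIdx n, 0 < j.1 ∧ (w j).1 = -1

/-- `E_1 = {w : w(j) = 1 for some 1 ≤ j ≤ n}`. -/
def InE1 {n : ℕ} (w : Equiv.Perm (SIdx n)) : Prop :=
  ∃ j : SIdx n, 0 < j.1 ∧ (w j).1 = 1

theorem sidx_neg_val {n : ℕ} (x : SIdx n) : (-x).1 = -x.1 := rfl

theorem sidx_ext {n : ℕ} {x y : SIdx n} (h : x.1 = y.1) : x = y := Subtype.ext h

theorem sidx_neg_neg {n : ℕ} (x : SIdx n) : - -x = x := by
  apply sidx_ext; simp [sidx_neg_val]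

/-- Underlying function of the signed transposition. -/
def swapFun (a b x : ℤ) : ℤ :=
  if x = a then b else if x = b then a else if x = -a then -b else if x = -b then -a else x

theorem swapFun_invol (a b : ℤ) (ha : 0 < a) (hb : 0 < b) (x : ℤ) :
    swapFun a b (swapFun a b x) = x := by
  unfold swapFun; grind

theorem swapFun_neg (a b : ℤ) (ha : 0 < a) (hb : 0 < b) (x : ℤ) :
    swapFun a b (-x) = -swapFun a b x := by
  unfold swapFun; grind

theorem swapFun_pos (a b : ℤ) (ha : 0 < a) (hb : 0 < b) (x : ℤ) (hx : 0 < x) :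
    0 < swapFun a b x := by
  unfold swapFun; grind

theorem swapFun_mem {n : ℕ} (a b x : SIdx n) :
    swapFun a.1 b.1 x.1 ≠ 0 ∧ (swapFun a.1 b.1 x.1).natAbs ≤ n := by
  have := a.2
  have := b.2
  have := x.2
  unfold swapFun
  split_ifs <;> omega

/-- There is an element of `W_Q` carrying `a` to `b`. -/
theorem exists_WQ {n : ℕ} (a b : SIdx n) (ha : 0 < a.1) (hb : 0 < b.1) :
    ∃ k : Equiv.Perm (SIdx n), InWQ k ∧ k a = b := by
  let f : SIdx n → SIdx n := fun x => ⟨swapFun a.1 b.1 x.1, swapFun_mem a b x⟩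
  have hf : Function.Involutive f := fun x => sidx_ext (swapFun_invol _ _ ha hb _)
  refine ⟨hf.toPerm f, ⟨fun x => sidx_ext (swapFun_neg _ _ ha hb _),
    fun x hx => swapFun_pos _ _ ha hb _ hx⟩, sidx_ext ?_⟩
  change swapFun a.1 b.1 a.1 = b.1
  simp [swapFun]

theorem signed_inv {n : ℕ} {w : Equiv.Perm (SIdx n)} (hw : IsSignedPerm w) :
    IsSignedPerm w⁻¹ := by
  intro x
  apply w.injective
  rw [hw]
  simp

theorem signed_mul {n : ℕ} {v w : Equiv.Perm (SIdx n)} (hv : IsSignedPerm v)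
    (hw : IsSignedPerm w) : IsSignedPerm (v * w) := by
  intro x
  simp only [Equiv.Perm.mul_apply]
  rw [hw, hv]

theorem coset_aux {n : ℕ} (e : ℤ) (he : e = 1 ∨ e = -1) (w w' : Equiv.Perm (SIdx n))
    (hw : IsSignedPerm w) (hw' : IsSignedPerm w') (hE : ∃ j : SIdx n, 0 < j.1 ∧ (w j).1 = e) :
    (∃ j : SIdx n, 0 < j.1 ∧ (w' j).1 = e) ↔ SameDC w w' := by
  obtain ⟨j, hj, hwj⟩ := hE
  constructor
  · rintro ⟨j', hj', hwj'⟩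
    obtain ⟨k, hk, hkj⟩ := exists_WQ j' j hj' hj
    have hs : IsSignedPerm (w' * k⁻¹ * w⁻¹) :=
      signed_mul (signed_mul hw' (signed_inv hk.1)) (signed_inv hw)
    have hv : (w' * k⁻¹ * w⁻¹) (w j) = w' j' := by
      simp [← hkj]
    refine ⟨w' * k⁻¹ * w⁻¹, k, ⟨hs, ?_⟩, hk, by group⟩
    intro x hx
    rcases he with rfl | rfl
    · have : x = w j := sidx_ext (by omega)
      rw [this, hv, hwj']
    · have : x = -(w j) := sidx_ext (by rw [sidx_neg_val]; omega)
      rw [this, hs, hv, sidx_neg_val, hwj']; rfl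
  · rintro ⟨h, k, hh, hk, rfl⟩
    refine ⟨k⁻¹ j, ?_, ?_⟩
    · by_contra hneg
      have h0 := (k⁻¹ j).2.1
      have h1 : 0 < (-(k⁻¹ j)).1 := by rw [sidx_neg_val]; omega
      have h2 := hk.2 _ h1
      rw [hk.1, sidx_neg_val] at h2
      simp at h2
      omega
    · have h3 : (h * w * k) (k⁻¹ j) = h (w j) := by simp
      rw [h3]
      rcases he with rfl | rfl
      · exact hh.2 _ hwj
      · have h4 := hh.2 (-(w j)) (by rw [sidx_neg_val]; omega)
        rw [hh.1, sidx_neg_val] at h4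
        omega

/-- For `n ≥ 2`, the sets `E_0` and `E_1` are each a single `(W_P, W_Q)` double coset,
and they partition `B_n` (so they are exactly the double cosets). -/
theorem stmt_10 (n : ℕ) (hn : 2 ≤ n) :
    ((∃ w : Equiv.Perm (SIdx n), IsSignedPerm w ∧ InE0 w) ∧
     (∃ w : Equiv.Perm (SIdx n), IsSignedPerm w ∧ InE1 w)) ∧
    ((∀ w w' : Equiv.Perm (SIdx n), IsSignedPerm w → IsSignedPerm w' →
        InE0 w → (InE0 w' ↔ SameDC w w')) ∧
     (∀ w w' : Equiv.Perm (SIdx n), IsSignedPerm w → IsSignedPerm w' →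
        InE1 w → (InE1 w' ↔ SameDC w w'))) ∧
    ((∀ w : Equiv.Perm (SIdx n), IsSignedPerm w → (InE0 w ∨ InE1 w)) ∧
     (∀ w : Equiv.Perm (SIdx n), IsSignedPerm w → ¬(InE0 w ∧ InE1 w))) := by
  let one : SIdx n := ⟨1, by omega, by simp; omega⟩
  have hone : one.1 = 1 := rfl
  refine ⟨⟨?_, ?_⟩, ⟨?_, ?_⟩, ?_, ?_⟩
  · have hf : Function.Involutive (fun x : SIdx n => -x) := sidx_neg_neg
    exact ⟨hf.toPerm _, fun x => rfl, one, by omega, rfl⟩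
  · exact ⟨1, fun x => rfl, one, by omega, rfl⟩
  · exact fun w w' hw hw' hE => coset_aux (-1) (Or.inr rfl) w w' hw hw' hE
  · exact fun w w' hw hw' hE => coset_aux 1 (Or.inl rfl) w w' hw hw' hE
  · intro w hw
    have h0 := (w⁻¹ one).2.1
    have h1 : w (w⁻¹ one) = one := by simp
    rcases lt_or_gt_of_ne h0 with h | h
    · left
      refine ⟨-(w⁻¹ one), by rw [sidx_neg_val]; omega, ?_⟩
      rw [hw, h1, sidx_neg_val]
    · right
      exact ⟨w⁻¹ one, h, by rw [h1]⟩
  · rintro w hw ⟨⟨i, hi, hwi⟩, ⟨j, hj, hwj⟩⟩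
    have h1 : w (-i) = w j := by
      apply sidx_ext
      rw [hw, sidx_neg_val]; omega
    have h2 := congrArg Subtype.val (w.injective h1)
    rw [sidx_neg_val] at h2
    omega
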